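/- arXiv:0708.3938 — 3 statements merged into one kernel-verified Lean document; each statement's English description precedes it below -/
import Mathlib

section
/- Let I = [0,1]² be the unit square, a¹ = (1, 1) and a² = (1, 1/2). Then there is no positive real number c such that sup_{t∈I} var_{O(t)} f ≤ c · sup_{t∈I} var_{{x∈I : a²·x = a²·t}} f holds for all f ∈ R_c¹, i.e. for all continuous functions f on I of the form f(x) = g(a¹·x) with g : ℝ → ℝ. -/
open Matrix Set Filter Topology

/-- `p 0, p 1, ..., p (m-1)` is a (finite) path whose first difference is
perpendicular to `a1`, with differences alternately perpendicular to `a1` and `a2`,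
and all differences nonzero. -/
def IsPathFrom {n : ℕ} (a1 a2 : Fin n → ℝ) (m : ℕ) (p : ℕ → Fin n → ℝ) : Prop :=
  ∀ i, i + 1 < m →
    p (i + 1) - p i ≠ 0 ∧
    (i % 2 = 0 → a1 ⬝ᵥ (p (i + 1) - p i) = 0) ∧
    (i % 2 = 1 → a2 ⬝ᵥ (p (i + 1) - p i) = 0)

/-- A finite path with respect to the directions `a1` and `a2` (the alternation may
start with either direction). -/
def IsPath {n : ℕ} (a1 a2 : Fin n → ℝ) (m : ℕ) (p : ℕ → Fin n → ℝ) : Prop :=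
  IsPathFrom a1 a2 m p ∨ IsPathFrom a2 a1 m p

/-- A finite path of length `m` (i.e. with `m` points) all of whose points lie in `X`. -/
def IsPathIn {n : ℕ} (a1 a2 : Fin n → ℝ) (X : Set (Fin n → ℝ)) (m : ℕ)
    (p : ℕ → Fin n → ℝ) : Prop :=
  1 ≤ m ∧ IsPath a1 a2 m p ∧ ∀ i < m, p i ∈ X

/-- An irreducible path in `X`: no strictly shorter path in `X` joins its endpoints. -/
def IsIrreduciblePathIn {n : ℕ} (a1 a2 : Fin n → ℝ) (X : Set (Fin n → ℝ)) (m : ℕ)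
    (p : ℕ → Fin n → ℝ) : Prop :=
  IsPathIn a1 a2 X m p ∧
  ¬ ∃ l q, l < m ∧ IsPathIn a1 a2 X l q ∧ q 0 = p 0 ∧ q (l - 1) = p (m - 1)

/-- An infinite path whose first difference is perpendicular to `a1`. -/
def IsInfPathFrom {n : ℕ} (a1 a2 : Fin n → ℝ) (p : ℕ → Fin n → ℝ) : Prop :=
  ∀ i,
    p (i + 1) - p i ≠ 0 ∧
    (i % 2 = 0 → a1 ⬝ᵥ (p (i + 1) - p i) = 0) ∧
    (i % 2 = 1 → a2 ⬝ᵥ (p (i + 1) - p i) = 0)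

/-- An infinite path with respect to the directions `a1` and `a2`. -/
def IsInfPath {n : ℕ} (a1 a2 : Fin n → ℝ) (p : ℕ → Fin n → ℝ) : Prop :=
  IsInfPathFrom a1 a2 p ∨ IsInfPathFrom a2 a1 p

/-- `f` is bounded on `X`. -/
def BddOn {n : ℕ} (f : (Fin n → ℝ) → ℝ) (X : Set (Fin n → ℝ)) : Prop :=
  ∃ M, ∀ x ∈ X, |f x| ≤ M

/-- `R_a(X)`: sums of two ridge functions with directions `a1, a2` that are bounded on `X`
(the individual summands need not be bounded). -/
def RaSet {n : ℕ} (a1 a2 : Fin n → ℝ) (X : Set (Fin n → ℝ)) : Set ((Fin n → ℝ) → ℝ) :=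
  {f | (∃ g1 g2 : ℝ → ℝ, ∀ x ∈ X, f x = g1 (a1 ⬝ᵥ x) + g2 (a2 ⬝ᵥ x)) ∧ BddOn f X}

/-- `R_b(X)`: sums of two ridge functions with directions `a1, a2` whose summands are
bounded on `X`. -/
def RbSet {n : ℕ} (a1 a2 : Fin n → ℝ) (X : Set (Fin n → ℝ)) : Set ((Fin n → ℝ) → ℝ) :=
  {f | ∃ g1 g2 : ℝ → ℝ, (∀ x ∈ X, f x = g1 (a1 ⬝ᵥ x) + g2 (a2 ⬝ᵥ x)) ∧
    BddOn (fun x => g1 (a1 ⬝ᵥ x)) X ∧ BddOn (fun x => g2 (a2 ⬝ᵥ x)) X}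

/-- `R_c(X)`: sums of two ridge functions with directions `a1, a2` whose summands are
continuous on `X`. -/
def RcSet {n : ℕ} (a1 a2 : Fin n → ℝ) (X : Set (Fin n → ℝ)) : Set ((Fin n → ℝ) → ℝ) :=
  {f | ∃ g1 g2 : ℝ → ℝ, (∀ x ∈ X, f x = g1 (a1 ⬝ᵥ x) + g2 (a2 ⬝ᵥ x)) ∧
    ContinuousOn (fun x => g1 (a1 ⬝ᵥ x)) X ∧ ContinuousOn (fun x => g2 (a2 ⬝ᵥ x)) X}

/-- The uniform (sup) distance of `f` and `g` over `X`. -/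
noncomputable def supDist {n : ℕ} (X : Set (Fin n → ℝ)) (f g : (Fin n → ℝ) → ℝ) : ℝ :=
  sSup {r | ∃ x ∈ X, r = |f x - g x|}

/-- `f` has an extremal element (best approximation in the sup norm over `X`) in `S`. -/
def HasExtremalIn {n : ℕ} (X : Set (Fin n → ℝ)) (f : (Fin n → ℝ) → ℝ)
    (S : Set ((Fin n → ℝ) → ℝ)) : Prop :=
  ∃ g0 ∈ S, supDist X f g0 = sInf ((supDist X f) '' S)

/-- The orbit of `t`: all points of `X` joined to `t` by a common path lying in `X`. -/
def Orbit {n : ℕ} (a1 a2 : Fin n → ℝ) (X : Set (Fin n → ℝ)) (t : Fin n → ℝ) :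
    Set (Fin n → ℝ) :=
  {y | ∃ m p, IsPathIn a1 a2 X m p ∧ (∃ i < m, p i = t) ∧ (∃ j < m, p j = y)}

/-- The variation of `f` on a set `Y`. -/
noncomputable def varOn {n : ℕ} (f : (Fin n → ℝ) → ℝ) (Y : Set (Fin n → ℝ)) : ℝ :=
  sSup {r | ∃ x ∈ Y, ∃ y ∈ Y, r = |f x - f y|}

/-! The ridge function `x ↦ log (max (a₁ ⬝ᵥ x) ε)` separates the two variations. On nonnegative
vectors `a₁ ⬝ᵥ x` and `a₂ ⬝ᵥ x` are comparable, so along a level line of `a₂` the value of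
`a₁ ⬝ᵥ x` changes at most by a fixed factor `C`, and the function varies by at most `log C`,
whatever `ε` is. On the other hand an orbit in the square accumulates at the origin: the path
zigzags between the two axes and shrinks geometrically. Along it `a₁ ⬝ᵥ x` gets arbitrarily
small, so the variation on that orbit tends to infinity as `ε → 0`. -/

section Variation

variable {n : ℕ} {a₁ a₂ : Fin n → ℝ} {X Y : Set (Fin n → ℝ)} {f : (Fin n → ℝ) → ℝ}

/-- The largest variation of `f` on an orbit of `X`, as a real supremum (`0` if unbounded). -/
noncomputable def orbitVariation (a₁ a₂ : Fin n → ℝ) (X : Set (Fin n → ℝ))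
    (f : (Fin n → ℝ) → ℝ) : ℝ :=
  sSup {r | ∃ t ∈ X, r = varOn f (Orbit a₁ a₂ X t)}

/-- The largest variation of `f` on a fibre `{x ∈ X | a ⬝ᵥ x = a ⬝ᵥ t}` over a point `t` of `X`,
as a real supremum (`0` if unbounded). -/
noncomputable def fibreVariation (a : Fin n → ℝ) (X : Set (Fin n → ℝ))
    (f : (Fin n → ℝ) → ℝ) : ℝ :=
  sSup {r | ∃ t ∈ X, r = varOn f {x ∈ X | a ⬝ᵥ x = a ⬝ᵥ t}}

theorem varOn_le {B : ℝ} (hB : 0 ≤ B) (h : ∀ x ∈ Y, ∀ y ∈ Y, |f x - f y| ≤ B) :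
    varOn f Y ≤ B := by
  refine Real.sSup_le ?_ hB
  rintro _ ⟨x, hx, y, hy, rfl⟩
  exact h x hx y hy

theorem abs_sub_le_varOn (hf : BddOn f Y) {x y : Fin n → ℝ} (hx : x ∈ Y) (hy : y ∈ Y) :
    |f x - f y| ≤ varOn f Y := by
  obtain ⟨M, hM⟩ := hf
  refine le_csSup ⟨M + M, ?_⟩ ⟨x, hx, y, hy, rfl⟩
  rintro _ ⟨u, hu, v, hv, rfl⟩
  exact (abs_sub _ _).trans (add_le_add (hM u hu) (hM v hv))

theorem fibreVariation_le {a : Fin n → ℝ} {B : ℝ} (hB : 0 ≤ B)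
    (h : ∀ x ∈ X, ∀ y ∈ X, a ⬝ᵥ x = a ⬝ᵥ y → |f x - f y| ≤ B) :
    fibreVariation a X f ≤ B := by
  refine Real.sSup_le ?_ hB
  rintro _ ⟨t, -, rfl⟩
  exact varOn_le hB fun x hx y hy => h x hx.1 y hy.1 (hx.2.trans hy.2.symm)

theorem orbit_subset (t : Fin n → ℝ) : Orbit a₁ a₂ X t ⊆ X := by
  rintro _ ⟨m, p, hp, -, j, hj, rfl⟩
  exact hp.2.2 j hj

theorem abs_sub_le_orbitVariation (hf : BddOn f X) {t x y : Fin n → ℝ} (ht : t ∈ X)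
    (hx : x ∈ Orbit a₁ a₂ X t) (hy : y ∈ Orbit a₁ a₂ X t) :
    |f x - f y| ≤ orbitVariation a₁ a₂ X f := by
  obtain ⟨M, hM⟩ := hf
  have hMt (s) : ∀ x ∈ Orbit a₁ a₂ X s, |f x| ≤ M := fun x hx => hM x (orbit_subset s hx)
  refine (abs_sub_le_varOn ⟨M, hMt t⟩ hx hy).trans (le_csSup ⟨M + M, ?_⟩ ⟨t, ht, rfl⟩)
  rintro _ ⟨s, hs, rfl⟩
  have hM0 : 0 ≤ M := (abs_nonneg _).trans (hM s hs)
  exact varOn_le (add_nonneg hM0 hM0) fun u hu v hv =>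
    (abs_sub _ _).trans (add_le_add (hMt s u hu) (hMt s v hv))

theorem bddOn_of_continuous (hX : Bornology.IsBounded X) (hf : Continuous f) : BddOn f X := by
  obtain ⟨M, hM⟩ := hX.isCompact_closure.exists_bound_of_continuousOn hf.continuousOn
  exact ⟨M, fun x hx => hM x (subset_closure hx)⟩

theorem IsInfPathFrom.isPathFrom {p : ℕ → Fin n → ℝ} (hp : IsInfPathFrom a₁ a₂ p) (m : ℕ) :
    IsPathFrom a₁ a₂ m p :=
  fun i _ => hp i

theorem IsInfPath.mem_orbit {p : ℕ → Fin n → ℝ} (hp : IsInfPath a₁ a₂ p) (hpX : ∀ i, p i ∈ X)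
    (i j : ℕ) : p j ∈ Orbit a₁ a₂ X (p i) :=
  ⟨i + j + 1, p,
    ⟨by omega, hp.imp (fun h => h.isPathFrom _) (fun h => h.isPathFrom _), fun k _ => hpX k⟩,
    ⟨i, by omega, rfl⟩, ⟨j, by omega, rfl⟩⟩

theorem IsInfPath.exists_ne_zero {p : ℕ → Fin n → ℝ} (hp : IsInfPath a₁ a₂ p) :
    ∃ i, p i ≠ 0 := by
  by_contra! h
  rcases hp with hp | hp <;> exact (hp 0).1 (by rw [h, h, sub_zero])

end Variation

section TruncatedLog

/-- The logarithm truncated at `ε > 0`, a function continuous on all of `ℝ`. -/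
noncomputable def truncLog (ε s : ℝ) : ℝ := Real.log (max s ε)

variable {ε s t C : ℝ}

theorem continuous_truncLog (hε : 0 < ε) : Continuous (truncLog ε) :=
  (continuous_id.max continuous_const).log fun _ => (lt_max_of_lt_right hε).ne'

theorem truncLog_sub_le (hε : 0 < ε) (hC : 1 ≤ C) (h : s ≤ C * t) :
    truncLog ε s - truncLog ε t ≤ Real.log C := by
  have hs : 0 < max s ε := lt_max_of_lt_right hε
  have ht : 0 < max t ε := lt_max_of_lt_right hε
  have hC0 : 0 < C := one_pos.trans_le hC
  have hmax : max s ε ≤ C * max t ε := by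
    rw [mul_max_of_nonneg _ _ hC0.le]
    exact max_le_max h (le_mul_of_one_le_left hε.le hC)
  rw [sub_le_iff_le_add, truncLog, truncLog, ← Real.log_mul hC0.ne' ht.ne']
  exact Real.log_le_log hs hmax

theorem abs_truncLog_sub_le (hε : 0 < ε) (hC : 1 ≤ C) (hst : s ≤ C * t) (hts : t ≤ C * s) :
    |truncLog ε s - truncLog ε t| ≤ Real.log C :=
  abs_sub_le_iff.2 ⟨truncLog_sub_le hε hC hst, truncLog_sub_le hε hC hts⟩

end TruncatedLog

section PositiveDirections

variable {n : ℕ} {a₁ a₂ : Fin n → ℝ} {X : Set (Fin n → ℝ)}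

theorem exists_dotProduct_le_mul (a : Fin n → ℝ) {b : Fin n → ℝ} (hb : ∀ i, 0 < b i) :
    ∃ C, 1 ≤ C ∧ ∀ x, 0 ≤ x → a ⬝ᵥ x ≤ C * (b ⬝ᵥ x) := by
  obtain ⟨C, hC⟩ := (finite_range fun i => a i / b i).bddAbove
  refine ⟨max 1 C, le_max_left _ _, fun x hx => ?_⟩
  have hab : a ≤ max 1 C • b := fun i =>
    (div_le_iff₀ (hb i)).1 ((hC (mem_range_self i)).trans (le_max_right _ _))
  calc a ⬝ᵥ x ≤ (max 1 C • b) ⬝ᵥ x := dotProduct_le_dotProduct_of_nonneg_right hab hx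
    _ = max 1 C * (b ⬝ᵥ x) := smul_dotProduct _ _ _

theorem exists_dotProduct_le_mul_of_dotProduct_eq (ha₁ : ∀ i, 0 < a₁ i) (ha₂ : ∀ i, 0 < a₂ i) :
    ∃ C, 1 ≤ C ∧ ∀ x y, 0 ≤ x → 0 ≤ y → a₂ ⬝ᵥ x = a₂ ⬝ᵥ y → a₁ ⬝ᵥ x ≤ C * (a₁ ⬝ᵥ y) := by
  obtain ⟨C, hC, h₁₂⟩ := exists_dotProduct_le_mul a₁ ha₂
  obtain ⟨D, hD, h₂₁⟩ := exists_dotProduct_le_mul a₂ ha₁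
  refine ⟨C * D, one_le_mul_of_one_le_of_one_le hC hD, fun x y hx hy hxy => ?_⟩
  calc a₁ ⬝ᵥ x ≤ C * (a₂ ⬝ᵥ x) := h₁₂ x hx
    _ = C * (a₂ ⬝ᵥ y) := by rw [hxy]
    _ ≤ C * (D * (a₁ ⬝ᵥ y)) := by gcongr; exact h₂₁ y hy
    _ = C * D * (a₁ ⬝ᵥ y) := (mul_assoc _ _ _).symm

theorem dotProduct_pos_of_pos {a x : Fin n → ℝ} (ha : ∀ i, 0 < a i) (hx : 0 ≤ x)
    (hx0 : x ≠ 0) : 0 < a ⬝ᵥ x := by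
  obtain ⟨i, hi⟩ := Function.ne_iff.1 hx0
  exact Finset.sum_pos' (fun j _ => mul_nonneg (ha j).le (hx j))
    ⟨i, Finset.mem_univ i, mul_pos (ha i) ((hx i).lt_of_ne' hi)⟩

theorem continuous_truncLog_dotProduct (a : Fin n → ℝ) {ε : ℝ} (hε : 0 < ε) :
    Continuous fun x : Fin n → ℝ => truncLog ε (a ⬝ᵥ x) :=
  (continuous_truncLog hε).comp (continuous_const.dotProduct continuous_id)

theorem exists_fibreVariation_truncLog_le (ha₁ : ∀ i, 0 < a₁ i) (ha₂ : ∀ i, 0 < a₂ i)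
    (hX : X ⊆ Ici 0) :
    ∃ K, ∀ ε, 0 < ε → fibreVariation a₂ X (fun x => truncLog ε (a₁ ⬝ᵥ x)) ≤ K := by
  obtain ⟨C, hC, h⟩ := exists_dotProduct_le_mul_of_dotProduct_eq ha₁ ha₂
  exact ⟨Real.log C, fun ε hε => fibreVariation_le (Real.log_nonneg hC) fun x hx y hy hxy =>
    abs_truncLog_sub_le hε hC (h x y (hX hx) (hX hy) hxy) (h y x (hX hy) (hX hx) hxy.symm)⟩

theorem exists_le_orbitVariation_truncLog (ha₁ : ∀ i, 0 < a₁ i) (hX : X ⊆ Ici 0)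
    (hXb : Bornology.IsBounded X) {p : ℕ → Fin n → ℝ} (hp : IsInfPath a₁ a₂ p)
    (hpX : ∀ i, p i ∈ X) (hp0 : Tendsto p atTop (𝓝 0)) (M : ℝ) :
    ∃ ε, 0 < ε ∧ M ≤ orbitVariation a₁ a₂ X (fun x => truncLog ε (a₁ ⬝ᵥ x)) := by
  obtain ⟨i, hi⟩ := hp.exists_ne_zero
  have hpos : 0 < a₁ ⬝ᵥ p i := dotProduct_pos_of_pos ha₁ (hX (hpX i)) hi
  set ε := a₁ ⬝ᵥ p i * Real.exp (-|M|) with hε_def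
  have hε : 0 < ε := by positivity
  have hεi : ε ≤ a₁ ⬝ᵥ p i :=
    mul_le_of_le_one_right hpos.le (Real.exp_le_one_iff.2 (neg_nonpos.2 (abs_nonneg M)))
  have hlim : Tendsto (fun k => a₁ ⬝ᵥ p k) atTop (𝓝 0) := by
    have hcont : Continuous fun x : Fin n → ℝ => a₁ ⬝ᵥ x :=
      continuous_const.dotProduct continuous_id
    simpa only [dotProduct_zero, Function.comp_def] using (hcont.tendsto 0).comp hp0
  obtain ⟨j, hj⟩ := (hlim.eventually_lt_const hε).exists
  have hdiff : truncLog ε (a₁ ⬝ᵥ p i) - truncLog ε (a₁ ⬝ᵥ p j) = |M| := by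
    rw [truncLog, truncLog, max_eq_left hεi, max_eq_right hj.le, hε_def,
      Real.log_mul hpos.ne' (Real.exp_ne_zero _), Real.log_exp]
    ring
  refine ⟨ε, hε, ?_⟩
  calc M ≤ |M| := le_abs_self M
    _ ≤ |truncLog ε (a₁ ⬝ᵥ p i) - truncLog ε (a₁ ⬝ᵥ p j)| := hdiff ▸ le_abs_self _
    _ ≤ _ := abs_sub_le_orbitVariation
      (bddOn_of_continuous hXb (continuous_truncLog_dotProduct a₁ hε)) (hpX i)
      (hp.mem_orbit hpX i i) (hp.mem_orbit hpX i j)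

theorem not_exists_orbitVariation_le (ha₁ : ∀ i, 0 < a₁ i) (ha₂ : ∀ i, 0 < a₂ i)
    (hX : X ⊆ Ici 0) (hXb : Bornology.IsBounded X) {p : ℕ → Fin n → ℝ}
    (hp : IsInfPath a₁ a₂ p) (hpX : ∀ i, p i ∈ X) (hp0 : Tendsto p atTop (𝓝 0)) :
    ¬ ∃ c : ℝ, 0 < c ∧ ∀ (g : ℝ → ℝ) (f : (Fin n → ℝ) → ℝ),
      (∀ x ∈ X, f x = g (a₁ ⬝ᵥ x)) → ContinuousOn f X →
        orbitVariation a₁ a₂ X f ≤ c * fibreVariation a₂ X f := by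
  rintro ⟨c, hc, hbound⟩
  obtain ⟨K, hK⟩ := exists_fibreVariation_truncLog_le ha₁ ha₂ hX
  obtain ⟨ε, hε, hM⟩ :=
    exists_le_orbitVariation_truncLog ha₁ hX hXb hp hpX hp0 (c * K + 1)
  have hcontra : c * K + 1 ≤ c * K :=
    calc c * K + 1 ≤ _ := hM
      _ ≤ c * fibreVariation a₂ X (fun x => truncLog ε (a₁ ⬝ᵥ x)) :=
        hbound (truncLog ε) _ (fun _ _ => rfl)
          (continuous_truncLog_dotProduct a₁ hε).continuousOn
      _ ≤ c * K := mul_le_mul_of_nonneg_left (hK ε hε) hc.le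
  linarith

end PositiveDirections

section Zigzag

variable {a b : Fin 2 → ℝ} {s r : ℝ}

/-- The path that alternates between the two axes, starting from `(a 1 * s, 0)`. Each step from
the first axis to the second is perpendicular to `a`, and every second step scales the path
by `r`. -/
def zigzag (a : Fin 2 → ℝ) (s r : ℝ) (i : ℕ) : Fin 2 → ℝ :=
  if i % 2 = 0 then ![a 1 * (s * r ^ (i / 2)), 0] else ![0, a 0 * (s * r ^ (i / 2))]

theorem zigzag_two_mul (a : Fin 2 → ℝ) (s r : ℝ) (k : ℕ) :
    zigzag a s r (2 * k) = ![a 1 * (s * r ^ k), 0] := by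
  simp [zigzag]

theorem zigzag_two_mul_add_one (a : Fin 2 → ℝ) (s r : ℝ) (k : ℕ) :
    zigzag a s r (2 * k + 1) = ![0, a 0 * (s * r ^ k)] := by
  simp [zigzag, Nat.add_mod, show (2 * k + 1) / 2 = k by omega]

theorem isInfPathFrom_zigzag (ha : a 0 ≠ 0) (hs : s ≠ 0) (hr : r ≠ 0)
    (hab : r * (a 1 * b 0) = a 0 * b 1) : IsInfPathFrom a b (zigzag a s r) := by
  intro i
  obtain ⟨k, rfl | rfl⟩ := i.even_or_odd'
  · have hstep : zigzag a s r (2 * k + 1) - zigzag a s r (2 * k) = (s * r ^ k) • ![-a 1, a 0] := by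
      rw [zigzag_two_mul, zigzag_two_mul_add_one]
      ext j
      fin_cases j <;> simp [mul_comm]
    rw [hstep]
    refine ⟨fun h => by simpa [hs, hr, ha] using congrFun h 1, fun _ => ?_, fun h => by omega⟩
    rw [dotProduct_smul, vec2_dotProduct, cons_val_zero, cons_val_one, cons_val_zero, smul_eq_mul]
    ring
  · have hstep : zigzag a s r (2 * k + 1 + 1) - zigzag a s r (2 * k + 1) =
        (s * r ^ k) • ![r * a 1, -a 0] := by
      rw [show 2 * k + 1 + 1 = 2 * (k + 1) by ring, zigzag_two_mul, zigzag_two_mul_add_one]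
      ext j
      fin_cases j <;> simp [pow_succ] <;> ring
    rw [hstep]
    refine ⟨fun h => by simpa [hs, hr, ha] using congrFun h 1, fun h => by omega, fun _ => ?_⟩
    rw [dotProduct_smul, vec2_dotProduct, cons_val_zero, cons_val_one, cons_val_zero, smul_eq_mul]
    linear_combination s * r ^ k * hab

theorem zigzag_mem_Icc (ha : 0 ≤ a) (hs : 0 ≤ s) (hr : 0 ≤ r) (hr1 : r ≤ 1)
    (has : ∀ j, a j * s ≤ 1) (i : ℕ) : zigzag a s r i ∈ Icc (0 : Fin 2 → ℝ) 1 := by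
  have hnonneg (j k) : 0 ≤ a j * (s * r ^ k) := mul_nonneg (ha j) (by positivity)
  have hle (j k) : a j * (s * r ^ k) ≤ 1 := by
    rw [← mul_assoc]
    exact mul_le_one₀ (has j) (by positivity) (pow_le_one₀ hr hr1)
  simp only [mem_Icc, Pi.le_def, Fin.forall_fin_two]
  obtain ⟨k, rfl | rfl⟩ := i.even_or_odd'
  · simp [zigzag_two_mul, hnonneg, hle]
  · simp [zigzag_two_mul_add_one, hnonneg, hle]

theorem tendsto_zigzag (a : Fin 2 → ℝ) (s : ℝ) (hr : 0 ≤ r) (hr1 : r < 1) :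
    Tendsto (zigzag a s r) atTop (𝓝 0) := by
  have hpow (c : ℝ) : Tendsto (fun i : ℕ => c * (s * r ^ (i / 2))) atTop (𝓝 0) := by
    simpa only [mul_zero, Function.comp_def] using
      (((tendsto_pow_atTop_nhds_zero_of_lt_one hr hr1).comp
        (Nat.tendsto_div_const_atTop two_ne_zero)).const_mul s).const_mul c
  refine Tendsto.if' ?_ ?_ <;> rw [tendsto_pi_nhds, Fin.forall_fin_two]
  · exact ⟨hpow (a 1), tendsto_const_nhds⟩
  · exact ⟨tendsto_const_nhds, hpow (a 0)⟩

theorem exists_isInfPathFrom_tendsto_zero (ha : ∀ i, 0 < a i) (hb : ∀ i, 0 < b i)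
    (hab : a 0 * b 1 < a 1 * b 0) :
    ∃ p, IsInfPathFrom a b p ∧ (∀ i, p i ∈ Icc (0 : Fin 2 → ℝ) 1) ∧
      Tendsto p atTop (𝓝 0) := by
  have ha0 := ha 0
  have ha1 := ha 1
  have hb0 := hb 0
  have hb1 := hb 1
  set s := (a 0 + a 1)⁻¹
  set r := a 0 * b 1 / (a 1 * b 0)
  have hs : 0 < s := by positivity
  have hr : 0 < r := by positivity
  have hr1 : r < 1 := (div_lt_one (by positivity)).2 hab
  have has : ∀ j, a j * s ≤ 1 := by
    simp only [s, ← div_eq_mul_inv, div_le_one (add_pos ha0 ha1), Fin.forall_fin_two]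
    exact ⟨by linarith, by linarith⟩
  exact ⟨zigzag a s r,
    isInfPathFrom_zigzag ha0.ne' hs.ne' hr.ne' (div_mul_cancel₀ _ (by positivity)),
    zigzag_mem_Icc (fun i => (ha i).le) hs.le hr.le hr1.le has, tendsto_zigzag a s hr.le hr1⟩

theorem exists_isInfPath_tendsto_zero (ha : ∀ i, 0 < a i) (hb : ∀ i, 0 < b i)
    (hab : a 0 * b 1 ≠ a 1 * b 0) :
    ∃ p, IsInfPath a b p ∧ (∀ i, p i ∈ Icc (0 : Fin 2 → ℝ) 1) ∧ Tendsto p atTop (𝓝 0) := by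
  rcases hab.lt_or_gt with h | h
  · obtain ⟨p, hp, hpI, hp0⟩ := exists_isInfPathFrom_tendsto_zero ha hb h
    exact ⟨p, Or.inl hp, hpI, hp0⟩
  · obtain ⟨p, hp, hpI, hp0⟩ := exists_isInfPathFrom_tendsto_zero hb ha (by linarith)
    exact ⟨p, Or.inr hp, hpI, hp0⟩

end Zigzag

theorem no_orbit_variation_bound_on_unit_square_general {a₁ a₂ : Fin 2 → ℝ}
    (ha₁ : ∀ i, 0 < a₁ i) (ha₂ : ∀ i, 0 < a₂ i) (ha : a₁ 0 * a₂ 1 ≠ a₁ 1 * a₂ 0) :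
    ¬ ∃ c : ℝ, 0 < c ∧ ∀ (g : ℝ → ℝ) (f : (Fin 2 → ℝ) → ℝ),
      (∀ x ∈ Icc (0 : Fin 2 → ℝ) 1, f x = g (a₁ ⬝ᵥ x)) →
      ContinuousOn f (Icc (0 : Fin 2 → ℝ) 1) →
        orbitVariation a₁ a₂ (Icc (0 : Fin 2 → ℝ) 1) f ≤
          c * fibreVariation a₂ (Icc (0 : Fin 2 → ℝ) 1) f := by
  obtain ⟨p, hp, hpI, hp0⟩ := exists_isInfPath_tendsto_zero ha₁ ha₂ ha
  exact not_exists_orbitVariation_le ha₁ ha₂ Icc_subset_Ici_self (Metric.isBounded_Icc 0 1)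
    hp hpI hp0

/-- on the unit square `I = [0,1]²` with `a¹ = (1,1)`,
`a² = (1,1/2)`, there is no `c > 0` such that
`sup_{t∈I} var_{O(t)} f ≤ c · sup_{t∈I} var_{π₂⁻¹(π₂(t))} f` for all continuous
functions `f` on `I` of the form `f(x) = g(a¹·x)`. -/
theorem no_orbit_variation_bound_on_unit_square :
    ¬ ∃ c : ℝ, 0 < c ∧
      ∀ (g : ℝ → ℝ) (f : (Fin 2 → ℝ) → ℝ),
        (∀ x ∈ Set.Icc (0 : Fin 2 → ℝ) 1, f x = g (![(1 : ℝ), 1] ⬝ᵥ x)) →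
        ContinuousOn f (Set.Icc (0 : Fin 2 → ℝ) 1) →
        sSup {r | ∃ t ∈ Set.Icc (0 : Fin 2 → ℝ) 1,
            r = varOn f (Orbit ![(1 : ℝ), 1] ![(1 : ℝ), 1 / 2]
              (Set.Icc (0 : Fin 2 → ℝ) 1) t)} ≤
          c * sSup {r | ∃ t ∈ Set.Icc (0 : Fin 2 → ℝ) 1,
            r = varOn f {x ∈ Set.Icc (0 : Fin 2 → ℝ) 1 |
              ![(1 : ℝ), 1 / 2] ⬝ᵥ x = ![(1 : ℝ), 1 / 2] ⬝ᵥ t}} := by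
  exact no_orbit_variation_bound_on_unit_square_general
    (by simp [Fin.forall_fin_two]) (by simp [Fin.forall_fin_two]) (by simp)
end

section
/- Let I = [0,1]² be the unit square, a¹ = (1, 1) and a² = (1, 1/2). Then R_c(I) is not proximinal in C(I); that is, there exists f ∈ C(I) having no extremal element in R_c(I). -/
open Matrix Set Filter Topology

/-!
The reason is that `R_c(I)` is not closed. Take `h t = √(-log t)`, which blows up at `0` but so
slowly that `h s - h t → 0` as `s, t → 0` with `s / t` confined to a compact subset of `(0, ∞)`.
Since `a¹·x` and `a²·x` are comparable on `I`, the function `f x = h (a¹·x) - h (a²·x)` is the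
uniform limit of its truncations `h (max (a¹·x) d) - h (max (a²·x) d) ∈ R_c(I)`, so its distance to
`R_c(I)` is zero. If `f x = g₁ (a¹·x) + g₂ (a²·x)`, follow the infinite path that bounces between
the two coordinate axes towards the origin: the function `g₂ + h` takes the same value along it,
so `g₂` is unbounded near `0`.
-/

section SupDist

variable {n : ℕ} {X : Set (Fin n → ℝ)} {f g : (Fin n → ℝ) → ℝ}

lemma supDist_nonneg : 0 ≤ supDist X f g := by
  refine Real.sSup_nonneg ?_
  rintro _ ⟨x, -, rfl⟩
  exact abs_nonneg _

lemma supDist_le {ε : ℝ} (hε : 0 ≤ ε) (h : ∀ x ∈ X, |f x - g x| ≤ ε) : supDist X f g ≤ ε := by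
  refine Real.sSup_le ?_ hε
  rintro _ ⟨x, hx, rfl⟩
  exact h x hx

lemma abs_sub_le_supDist (h : BddOn (fun x => f x - g x) X) {x : Fin n → ℝ} (hx : x ∈ X) :
    |f x - g x| ≤ supDist X f g := by
  obtain ⟨M, hM⟩ := h
  refine le_csSup ⟨M, ?_⟩ ⟨x, hx, rfl⟩
  rintro _ ⟨y, hy, rfl⟩
  exact hM y hy

lemma not_hasExtremalIn_of_uniform_approx {S : Set ((Fin n → ℝ) → ℝ)}
    (hbdd : ∀ g ∈ S, BddOn (fun x => f x - g x) X)
    (happrox : ∀ ε > 0, ∃ g ∈ S, ∀ x ∈ X, |f x - g x| ≤ ε)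
    (hne : ∀ g ∈ S, ¬ EqOn f g X) : ¬ HasExtremalIn X f S := by
  rintro ⟨g₀, hg₀, hmin⟩
  have hbelow : BddBelow (supDist X f '' S) :=
    ⟨0, forall_mem_image.2 fun _ _ => supDist_nonneg⟩
  have hdist : supDist X f g₀ ≤ 0 := by
    refine le_of_forall_pos_le_add fun ε hε => ?_
    obtain ⟨g, hg, hfg⟩ := happrox ε hε
    calc supDist X f g₀ = sInf (supDist X f '' S) := hmin
      _ ≤ supDist X f g := csInf_le hbelow (mem_image_of_mem _ hg)
      _ ≤ 0 + ε := by simpa using supDist_le hε.le hfg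
  refine hne g₀ hg₀ fun x hx => sub_eq_zero.1 (abs_nonpos_iff.1 ?_)
  exact (abs_sub_le_supDist (hbdd g₀ hg₀) hx).trans hdist

end SupDist

section RcSet

variable {n : ℕ} {a b : Fin n → ℝ} {X : Set (Fin n → ℝ)}

lemma continuousOn_of_mem_RcSet {g : (Fin n → ℝ) → ℝ} (hg : g ∈ RcSet a b X) :
    ContinuousOn g X := by
  obtain ⟨g₁, g₂, hsum, hg₁, hg₂⟩ := hg
  exact (hg₁.add hg₂).congr hsum

lemma sub_mem_RcSet {g₁ g₂ : ℝ → ℝ} (hg₁ : Continuous g₁) (hg₂ : Continuous g₂) :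
    (fun x => g₁ (a ⬝ᵥ x) - g₂ (b ⬝ᵥ x)) ∈ RcSet a b X :=
  ⟨g₁, fun t => -g₂ t, fun _ _ => sub_eq_add_neg _ _, by fun_prop, by fun_prop⟩

end RcSet

/-- Additive slow variation at `0` from the right: `h s - h t → 0` as `s → 0⁺`, uniformly over
all `t > 0` comparable with `s` up to a factor `K`. -/
def SlowlyVaryingAtZero (h : ℝ → ℝ) : Prop :=
  ∀ K ε : ℝ, 0 < ε → ∀ᶠ s in 𝓝[>] 0, ∀ t > 0, s ≤ K * t → t ≤ K * s → |h s - h t| ≤ ε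

lemma continuous_comp_max_of_continuousOn_Ioi {h : ℝ → ℝ} (hcont : ContinuousOn h (Ioi 0))
    {d : ℝ} (hd : 0 < d) : Continuous fun t => h (max t d) :=
  hcont.comp_continuous (by fun_prop) fun _ => lt_max_of_lt_right hd

namespace SlowlyVaryingAtZero

variable {h : ℝ → ℝ}

lemma exists_abs_sub_truncation_le (hslow : SlowlyVaryingAtZero h) (K : ℝ) {ε : ℝ} (hε : 0 < ε) :
    ∃ d > 0, ∀ u v, 0 ≤ u → 0 ≤ v → u ≤ K * v → v ≤ K * u →
      |h u - h v - (h (max u d) - h (max v d))| ≤ ε := by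
  obtain ⟨d, hd, hclose⟩ :=
    mem_nhdsGT_iff_exists_Ioc_subset.1 (hslow K (ε / 2) (half_pos hε))
  refine ⟨d, hd, fun u v hu hv huv hvu => ?_⟩
  wlog hle : u ≤ v generalizing u v
  · rw [← abs_neg]
    convert this v u hv hu hvu huv (le_of_not_ge hle) using 2
    ring
  rcases le_or_gt d u with hdu | hud
  · simpa [max_eq_left hdu, max_eq_left (hdu.trans hle)] using hε.le
  rcases hu.eq_or_lt with rfl | hu
  · obtain rfl : v = 0 := le_antisymm (by simpa using hvu) hv
    simpa using hε.le
  have hK : 1 ≤ K := le_of_mul_le_mul_right (by linarith) hu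
  have hvd : max v d ≤ K * d := max_le (by nlinarith) (by nlinarith [mem_Ioi.1 hd])
  have hdv : d ≤ K * max v d := by nlinarith [mem_Ioi.1 hd, le_max_right v d]
  have huv_close : |h u - h v| ≤ ε / 2 := hclose ⟨hu, hud.le⟩ v (hu.trans_le hle) huv hvu
  have hmax_close : |h d - h (max v d)| ≤ ε / 2 :=
    hclose ⟨hd, le_rfl⟩ _ (lt_max_of_lt_right hd) hdv hvd
  rw [max_eq_right hud.le]
  calc |h u - h v - (h d - h (max v d))| ≤ |h u - h v| + |h d - h (max v d)| := abs_sub _ _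
    _ ≤ ε := by linarith

lemma continuousOn_comp_sub_comp (hslow : SlowlyVaryingAtZero h) (hcont : ContinuousOn h (Ioi 0))
    {α : Type*} [TopologicalSpace α] {X : Set α} {u v : α → ℝ} {K : ℝ}
    (hu : ContinuousOn u X) (hv : ContinuousOn v X)
    (hu₀ : ∀ x ∈ X, 0 ≤ u x) (hv₀ : ∀ x ∈ X, 0 ≤ v x)
    (huv : ∀ x ∈ X, u x ≤ K * v x) (hvu : ∀ x ∈ X, v x ≤ K * u x) :
    ContinuousOn (fun x => h (u x) - h (v x)) X := by
  refine continuousOn_of_uniform_approx_of_continuousOn fun s hs => ?_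
  obtain ⟨ε, hε, hεs⟩ := Metric.mem_uniformity_dist.1 hs
  obtain ⟨d, hd, hd_close⟩ := hslow.exists_abs_sub_truncation_le K (half_pos hε)
  have htrunc := continuous_comp_max_of_continuousOn_Ioi hcont hd
  refine ⟨fun x => h (max (u x) d) - h (max (v x) d),
    (htrunc.comp_continuousOn hu).sub (htrunc.comp_continuousOn hv), fun x hx => hεs ?_⟩
  rw [Real.dist_eq]
  exact (hd_close _ _ (hu₀ x hx) (hv₀ x hx) (huv x hx) (hvu x hx)).trans_lt (half_lt_self hε)

end SlowlyVaryingAtZero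

lemma abs_sqrt_sub_sqrt_mul_sqrt_le {x : ℝ} (hx : 0 ≤ x) (y : ℝ) :
    |√x - √y| * √x ≤ |x - y| := by
  rcases le_total 0 y with hy | hy
  · calc |√x - √y| * √x ≤ |√x - √y| * (√x + √y) := by gcongr; simp
      _ = |(√x - √y) * (√x + √y)| := by rw [abs_mul, abs_of_nonneg (a := √x + √y) (by positivity)]
      _ = |x - y| := by rw [mul_comm, ← sq_sub_sq, Real.sq_sqrt hx, Real.sq_sqrt hy]
  · rw [Real.sqrt_eq_zero_of_nonpos hy, sub_zero, abs_of_nonneg (Real.sqrt_nonneg x),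
      Real.mul_self_sqrt hx]
    exact (by linarith : x ≤ x - y).trans (le_abs_self _)

lemma abs_log_sub_log_le {s t K : ℝ} (hs : 0 < s) (ht : 0 < t) (hst : s ≤ K * t)
    (hts : t ≤ K * s) : |Real.log s - Real.log t| ≤ Real.log K := by
  have hK : 0 < K := pos_of_mul_pos_left (hs.trans_le hst) ht.le
  have hlog_st := Real.log_le_log hs hst
  have hlog_ts := Real.log_le_log ht hts
  rw [Real.log_mul hK.ne' ht.ne'] at hlog_st
  rw [Real.log_mul hK.ne' hs.ne'] at hlog_ts
  exact abs_sub_le_iff.2 ⟨by linarith, by linarith⟩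

/-- The slowly diverging profile `√(-log t)` from which the counterexample is built. Since
`Real.sqrt` vanishes on negative numbers, it is `0` for `t ≥ 1`; at `t = 0` it has the junk
value `0`. -/
noncomputable def sqrtNegLog (t : ℝ) : ℝ := √(-Real.log t)

lemma continuousOn_sqrtNegLog : ContinuousOn sqrtNegLog (Ioi 0) :=
  (Real.continuousOn_log.mono fun _ ht => (mem_Ioi.1 ht).ne').neg.sqrt

lemma tendsto_sqrtNegLog_nhdsGT_zero : Tendsto sqrtNegLog (𝓝[>] 0) atTop :=
  Real.tendsto_sqrt_atTop.comp (tendsto_neg_atBot_atTop.comp Real.tendsto_log_nhdsGT_zero)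

lemma slowlyVaryingAtZero_sqrtNegLog : SlowlyVaryingAtZero sqrtNegLog := by
  intro K ε hε
  filter_upwards [self_mem_nhdsWithin, tendsto_sqrtNegLog_nhdsGT_zero.eventually_gt_atTop 0,
    tendsto_sqrtNegLog_nhdsGT_zero.eventually_ge_atTop (Real.log K / ε)]
    with s hs hpos hlarge t ht hst hts
  refine le_of_mul_le_mul_right ?_ hpos
  calc |sqrtNegLog s - sqrtNegLog t| * sqrtNegLog s
      ≤ |-Real.log s - -Real.log t| :=
        abs_sqrt_sub_sqrt_mul_sqrt_le (Real.sqrt_pos.1 hpos).le _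
    _ = |Real.log s - Real.log t| := by rw [neg_sub_neg, abs_sub_comm]
    _ ≤ Real.log K := abs_log_sub_log_le hs ht hst hts
    _ ≤ ε * sqrtNegLog s := (div_le_iff₀' hε).1 hlarge

lemma exists_dotProduct_le_mul_dotProduct {ι : Type*} [Fintype ι] (a : ι → ℝ) {b : ι → ℝ}
    (hb : ∀ i, 0 < b i) : ∃ K, ∀ x, 0 ≤ x → a ⬝ᵥ x ≤ K * (b ⬝ᵥ x) := by
  refine ⟨∑ i, |a i / b i|, fun x hx => ?_⟩
  rw [← smul_eq_mul, ← smul_dotProduct]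
  refine dotProduct_le_dotProduct_of_nonneg_right (fun i => ?_) hx
  rw [Pi.smul_apply, smul_eq_mul, ← div_le_iff₀ (hb i)]
  exact (le_abs_self _).trans
    (Finset.single_le_sum (f := fun i => |a i / b i|) (fun _ _ => abs_nonneg _) (Finset.mem_univ i))

lemma exists_dotProduct_comparable {ι : Type*} [Fintype ι] {a b : ι → ℝ}
    (ha : ∀ i, 0 < a i) (hb : ∀ i, 0 < b i) :
    ∃ K, ∀ x, 0 ≤ x → a ⬝ᵥ x ≤ K * (b ⬝ᵥ x) ∧ b ⬝ᵥ x ≤ K * (a ⬝ᵥ x) := by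
  obtain ⟨K₁, hK₁⟩ := exists_dotProduct_le_mul_dotProduct a hb
  obtain ⟨K₂, hK₂⟩ := exists_dotProduct_le_mul_dotProduct b ha
  refine ⟨max K₁ K₂, fun x hx => ⟨(hK₁ x hx).trans ?_, (hK₂ x hx).trans ?_⟩⟩
  · exact mul_le_mul_of_nonneg_right (le_max_left _ _)
      (dotProduct_nonneg_of_nonneg (fun i => (hb i).le) hx)
  · exact mul_le_mul_of_nonneg_right (le_max_right _ _)
      (dotProduct_nonneg_of_nonneg (fun i => (ha i).le) hx)

lemma not_tendsto_atTop_of_scale_invariant {ψ : ℝ → ℝ} {r t₀ : ℝ} (hr₀ : 0 < r) (hr₁ : r < 1)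
    (ht₀ : 0 < t₀) (hψ : ∀ t ∈ Ioc 0 t₀, ψ (r * t) = ψ t) : ¬ Tendsto ψ (𝓝[>] 0) atTop := by
  intro hlim
  have hconst (k : ℕ) : ψ (r ^ k * t₀) = ψ t₀ := by
    induction k with
    | zero => simp
    | succ k ih =>
      rw [pow_succ', mul_assoc, hψ _ ⟨by positivity, ?_⟩, ih]
      exact mul_le_of_le_one_left ht₀.le (pow_le_one₀ hr₀.le hr₁.le)
  have hseq : Tendsto (fun k : ℕ => r ^ k * t₀) atTop (𝓝[>] 0) := by
    refine tendsto_nhdsWithin_iff.2 ⟨?_, .of_forall fun k => mem_Ioi.2 (by positivity)⟩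
    simpa using (tendsto_pow_atTop_nhds_zero_of_lt_one hr₀.le hr₁).mul_const t₀
  refine not_tendsto_const_atTop (ψ t₀) (atTop : Filter ℕ) ?_
  simpa only [Function.comp_def, hconst] using hlim.comp hseq

section Cube

variable {n : ℕ} {a b : Fin n → ℝ} {i j : Fin n}

lemma single_mem_Icc_zero_one {t : ℝ} (ht : t ∈ Icc (0 : ℝ) 1) (i : Fin n) :
    Pi.single i t ∈ Icc (0 : Fin n → ℝ) 1 :=
  ⟨Pi.single_nonneg.2 ht.1, update_le_iff.2 ⟨ht.2, fun _ _ => zero_le_one⟩⟩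

lemma tendsto_ridge_nhdsGT_zero {g : ℝ → ℝ}
    (hg : ContinuousOn (fun x => g (b ⬝ᵥ x)) (Icc (0 : Fin n → ℝ) 1)) (i : Fin n) :
    Tendsto (fun t => g (b i * t)) (𝓝[>] 0) (𝓝 (g 0)) := by
  have haxis : Tendsto (fun t : ℝ => (Pi.single i t : Fin n → ℝ)) (𝓝[>] 0) (𝓝[Icc 0 1] 0) := by
    refine tendsto_nhdsWithin_iff.2 ⟨?_, ?_⟩
    · simpa using ((continuous_single (A := fun _ => ℝ) i).tendsto 0).mono_left nhdsWithin_le_nhds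
    · filter_upwards [Ioc_mem_nhdsGT zero_lt_one] with t ht
      exact single_mem_Icc_zero_one (Ioc_subset_Icc_self ht) i
  simpa [Function.comp_def] using (hg 0 (left_mem_Icc.2 zero_le_one)).tendsto.comp haxis

/- Two steps of the path: the point `t • eᵢ` has the same `a`-value as `(aᵢ t / aⱼ) • eⱼ`, which in
turn has the same `b`-value as `(r t) • eᵢ` for the factor `r = aᵢ bⱼ / (aⱼ bᵢ)`. -/
lemma ridge_scale_invariant {φ ψ : ℝ → ℝ} (hai : 0 ≤ a i) (haj : 0 < a j) (hbi : b i ≠ 0)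
    (hsum : ∀ x ∈ Icc (0 : Fin n → ℝ) 1, φ (a ⬝ᵥ x) + ψ (b ⬝ᵥ x) = 0) {t : ℝ}
    (ht : t ∈ Icc 0 1) (hta : a i * t ≤ a j) :
    ψ (b i * (a i * b j / (a j * b i) * t)) = ψ (b i * t) := by
  have hs : a i * t / a j ∈ Icc (0 : ℝ) 1 :=
    ⟨div_nonneg (mul_nonneg hai ht.1) haj.le, (div_le_one haj).2 hta⟩
  have hi := hsum _ (single_mem_Icc_zero_one ht i)
  have hj := hsum _ (single_mem_Icc_zero_one hs j)
  rw [dotProduct_single, dotProduct_single] at hi hj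
  rw [mul_div_cancel₀ _ haj.ne'] at hj
  have hscale : b i * (a i * b j / (a j * b i) * t) = b j * (a i * t / a j) := by field_simp
  rw [hscale]
  linarith

lemma not_eqOn_of_mem_RcSet {h : ℝ → ℝ} (hlim : Tendsto h (𝓝[>] 0) atTop)
    (hai : 0 < a i) (haj : 0 < a j) (hbi : 0 < b i) (hbj : 0 < b j)
    (hab : a i * b j ≠ a j * b i) {g : (Fin n → ℝ) → ℝ} (hg : g ∈ RcSet a b (Icc 0 1)) :
    ¬ EqOn (fun x => h (a ⬝ᵥ x) - h (b ⬝ᵥ x)) g (Icc 0 1) := by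
  wlog hlt : a i * b j < a j * b i generalizing i j
  · exact this haj hai hbj hbi hab.symm (hab.lt_or_gt.resolve_left hlt)
  intro heq
  obtain ⟨g₁, g₂, hsum, -, hg₂⟩ := hg
  have hzero : ∀ x ∈ Icc (0 : Fin n → ℝ) 1,
      (g₁ (a ⬝ᵥ x) - h (a ⬝ᵥ x)) + (g₂ (b ⬝ᵥ x) + h (b ⬝ᵥ x)) = 0 := fun x hx => by
    linarith [show h (a ⬝ᵥ x) - h (b ⬝ᵥ x) = _ from (heq hx).trans (hsum x hx)]
  have hscale : Tendsto (fun t => b i * t) (𝓝[>] 0) (𝓝[>] 0) := by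
    refine tendsto_nhdsWithin_iff.2 ⟨?_, eventually_mem_nhdsWithin.mono fun t ht => mul_pos hbi ht⟩
    simpa using ((continuous_const_mul (b i)).tendsto 0).mono_left nhdsWithin_le_nhds
  have hdiverges : Tendsto (fun t => g₂ (b i * t) + h (b i * t)) (𝓝[>] 0) atTop :=
    (tendsto_ridge_nhdsGT_zero hg₂ i).add_atTop (hlim.comp hscale)
  refine not_tendsto_atTop_of_scale_invariant (r := a i * b j / (a j * b i))
    (t₀ := min 1 (a j / a i)) (by positivity) ((div_lt_one (by positivity)).2 hlt)
    (by positivity) (fun t ht => ?_) hdiverges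
  exact ridge_scale_invariant (φ := fun s => g₁ s - h s) (ψ := fun s => g₂ s + h s)
    hai.le haj hbi.ne' hzero ⟨ht.1.le, ht.2.trans (min_le_left _ _)⟩
    ((le_div_iff₀' hai).1 (ht.2.trans (min_le_right _ _)))

end Cube

theorem Rc_not_proximinal_on_unit_square_general {n : ℕ} {a b : Fin n → ℝ} (ha : ∀ i, 0 < a i)
    (hb : ∀ i, 0 < b i) {i j : Fin n} (hab : a i * b j ≠ a j * b i) :
    ∃ f : (Fin n → ℝ) → ℝ, ContinuousOn f (Icc 0 1) ∧
      ¬ HasExtremalIn (Icc 0 1) f (RcSet a b (Icc 0 1)) := by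
  have ha_nonneg : ∀ x ∈ Icc (0 : Fin n → ℝ) 1, 0 ≤ a ⬝ᵥ x := fun x hx =>
    dotProduct_nonneg_of_nonneg (fun i => (ha i).le) hx.1
  have hb_nonneg : ∀ x ∈ Icc (0 : Fin n → ℝ) 1, 0 ≤ b ⬝ᵥ x := fun x hx =>
    dotProduct_nonneg_of_nonneg (fun i => (hb i).le) hx.1
  obtain ⟨K, hK⟩ := exists_dotProduct_comparable ha hb
  have hcont : ContinuousOn (fun x => sqrtNegLog (a ⬝ᵥ x) - sqrtNegLog (b ⬝ᵥ x)) (Icc 0 1) :=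
    slowlyVaryingAtZero_sqrtNegLog.continuousOn_comp_sub_comp continuousOn_sqrtNegLog
      (by fun_prop) (by fun_prop) ha_nonneg hb_nonneg
      (fun x hx => (hK x hx.1).1) (fun x hx => (hK x hx.1).2)
  refine ⟨_, hcont, not_hasExtremalIn_of_uniform_approx (fun g hg => ?_) (fun ε hε => ?_)
    fun g hg => not_eqOn_of_mem_RcSet tendsto_sqrtNegLog_nhdsGT_zero
      (ha i) (ha j) (hb i) (hb j) hab hg⟩
  · exact isCompact_Icc.exists_bound_of_continuousOn (hcont.sub (continuousOn_of_mem_RcSet hg))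
  · obtain ⟨d, hd, hd_close⟩ := slowlyVaryingAtZero_sqrtNegLog.exists_abs_sub_truncation_le K hε
    have htrunc := continuous_comp_max_of_continuousOn_Ioi continuousOn_sqrtNegLog hd
    exact ⟨_, sub_mem_RcSet htrunc htrunc, fun x hx => hd_close _ _ (ha_nonneg x hx)
      (hb_nonneg x hx) (hK x hx.1).1 (hK x hx.1).2⟩

/-- the space `R_c(I)` with the directions `a¹ = (1,1)` and
`a² = (1,1/2)` is not proximinal in `C(I)`, where `I = [0,1]²`: some continuous
function on `I` has no extremal element in `R_c(I)`. -/
theorem Rc_not_proximinal_on_unit_square :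
    ∃ f : (Fin 2 → ℝ) → ℝ, ContinuousOn f (Set.Icc (0 : Fin 2 → ℝ) 1) ∧
      ¬ HasExtremalIn (Set.Icc (0 : Fin 2 → ℝ) 1) f
          (RcSet ![(1 : ℝ), 1] ![(1 : ℝ), 1 / 2] (Set.Icc (0 : Fin 2 → ℝ) 1)) := by
  exact Rc_not_proximinal_on_unit_square_general (i := 0) (j := 1)
    (by simp [Fin.forall_fin_two]) (by simp [Fin.forall_fin_two]) (by norm_num)
end

section
/- Let a¹ and a² be two fixed distinct directions in ℝⁿ. For every subset X of ℝⁿ, the space R_a(X) is proximinal in B(X); that is, every f ∈ B(X) has an extremal element in R_a(X). -/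
open Matrix Set Filter Topology

/-!
Let `g k (a¹ · x) + h k (a² · x)` be a minimizing sequence for `f`. It is uniformly bounded on `X`,
so it converges pointwise along an ultrafilter, but its summands need not. Call `s` and `s'`
equivalent when `g k s - g k s'` converges and choose a representative `r s` in each class. Then
`g k s - g k (r s)` converges for every `s`. If `g k s + h k t` converges, so does
`g k (r s) + h k t`, and since any two such `s` are equivalent, its limit depends only on `t`. Hence
the limit of the sums is again a sum of a function of `a¹ · x` and a function of `a² · x`.
-/

section Limits

variable {ι S T E : Type*} [AddCommGroup E] [TopologicalSpace E] [IsTopologicalAddGroup E]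

/-- The relation on `S` identifying `s` and `s'` when `g k s - g k s'` converges along `l`. On each
class the functions `g k` may diverge only by a common summand. -/
def convergentDiffSetoid (l : Filter ι) (g : ι → S → E) : Setoid S where
  r s s' := ∃ c, Tendsto (fun k => g k s - g k s') l (𝓝 c)
  iseqv :=
    { refl := fun _ => ⟨0, by simpa only [sub_self] using tendsto_const_nhds⟩
      symm := fun ⟨c, hc⟩ => ⟨-c, by simpa only [neg_sub] using hc.neg⟩
      trans := fun ⟨c, hc⟩ ⟨c', hc'⟩ =>
        ⟨c + c', by simpa only [sub_add_sub_cancel] using hc.add hc'⟩ }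

theorem exists_tendsto_add_of_convergent (l : Filter ι) (g : ι → S → E) (h : ι → T → E) :
    ∃ (G : S → E) (H : T → E), ∀ s t, (∃ c, Tendsto (fun k => g k s + h k t) l (𝓝 c)) →
      Tendsto (fun k => g k s + h k t) l (𝓝 (G s + H t)) := by
  let rep (s : S) : S := (Quotient.mk (convergentDiffSetoid l g) s).out
  have sub_rep (s : S) : ∃ c, Tendsto (fun k => g k s - g k (rep s)) l (𝓝 c) :=
    (convergentDiffSetoid l g).symm (Quotient.mk_out s)
  have rep_add (t : T) : ∃ c, ∀ s, (∃ c', Tendsto (fun k => g k s + h k t) l (𝓝 c')) →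
      Tendsto (fun k => g k (rep s) + h k t) l (𝓝 c) := by
    by_cases ht : ∃ s c', Tendsto (fun k => g k s + h k t) l (𝓝 c')
    · obtain ⟨s₀, c₀, hs₀⟩ := ht
      obtain ⟨b, hb⟩ := sub_rep s₀
      refine ⟨c₀ - b, fun s ⟨c, hs⟩ => ?_⟩
      have rep_eq : rep s = rep s₀ := congrArg Quotient.out <| Quotient.sound
        ⟨c - c₀, by simpa only [add_sub_add_right_eq_sub] using hs.sub hs₀⟩
      rw [rep_eq]
      exact (hs₀.sub hb).congr fun k => by abel
    · exact ⟨0, fun s hs => absurd ⟨s, hs⟩ ht⟩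
  choose G hG using sub_rep
  choose H hH using rep_add
  exact ⟨G, H, fun s t hst => ((hG s).add (hH t s hst)).congr fun k => by abel⟩

end Limits

section Approximation

variable {α E : Type*} [SeminormedAddCommGroup E] {X : Set α} {f g : α → E}

theorem exists_tendsto_of_norm_le [ProperSpace E] {ι : Type*} (l : Ultrafilter ι) {u : ι → E}
    {C : ℝ} (hu : ∀ k, ‖u k‖ ≤ C) : ∃ c, Tendsto u l (𝓝 c) := by
  have mem_map : Metric.closedBall 0 C ∈ l.map u :=
    Ultrafilter.mem_map.mpr <| univ_mem' fun k => mem_closedBall_zero_iff.mpr (hu k)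
  obtain ⟨c, -, hc⟩ := (isCompact_closedBall 0 C).ultrafilter_le_nhds' (l.map u) mem_map
  exact ⟨c, hc⟩

/-- The uniform distance over `X`; for `E = ℝ` it unfolds to `supDist`. As `sSup` is `0` on
unbounded sets of reals, it is meaningful only when `f - g` is bounded on `X`. -/
noncomputable def uniformDist (X : Set α) (f g : α → E) : ℝ :=
  sSup {r | ∃ x ∈ X, r = ‖f x - g x‖}

theorem uniformDist_nonneg : 0 ≤ uniformDist X f g := by
  apply Real.sSup_nonneg
  rintro _ ⟨x, -, rfl⟩
  exact norm_nonneg _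

theorem uniformDist_le {d : ℝ} (hd : 0 ≤ d) (h : ∀ x ∈ X, ‖f x - g x‖ ≤ d) :
    uniformDist X f g ≤ d := by
  apply Real.sSup_le _ hd
  rintro _ ⟨x, hx, rfl⟩
  exact h x hx

theorem norm_sub_le_uniformDist (hf : ∃ M, ∀ x ∈ X, ‖f x‖ ≤ M) (hg : ∃ M, ∀ x ∈ X, ‖g x‖ ≤ M)
    {x : α} (hx : x ∈ X) : ‖f x - g x‖ ≤ uniformDist X f g := by
  obtain ⟨M, hM⟩ := hf
  obtain ⟨N, hN⟩ := hg
  refine le_csSup ⟨M + N, ?_⟩ ⟨x, hx, rfl⟩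
  rintro _ ⟨y, hy, rfl⟩
  exact norm_sub_le_of_le (hM y hy) (hN y hy)

theorem exists_uniformDist_eq_sInf (l : Filter ℕ) [l.NeBot] (hl : l ≤ atTop) {A : Set (α → E)}
    (hA : A.Nonempty) (hA_bdd : ∀ g ∈ A, ∃ M, ∀ x ∈ X, ‖g x‖ ≤ M)
    (hA_lim : ∀ F : ℕ → α → E, (∀ k, F k ∈ A) → (∃ M, ∀ k, ∀ x ∈ X, ‖F k x‖ ≤ M) →
      ∃ G ∈ A, ∀ x ∈ X, Tendsto (fun k => F k x) l (𝓝 (G x)))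
    (hf : ∃ M, ∀ x ∈ X, ‖f x‖ ≤ M) :
    ∃ g₀ ∈ A, uniformDist X f g₀ = sInf (uniformDist X f '' A) := by
  have nonneg : ∀ r ∈ uniformDist X f '' A, 0 ≤ r := by
    rintro _ ⟨g, -, rfl⟩
    exact uniformDist_nonneg
  obtain ⟨u, -, u_lim, u_mem⟩ := exists_seq_tendsto_sInf (hA.image _) ⟨0, nonneg⟩
  choose F hFA hFu using u_mem
  have dist_le (k : ℕ) : ∀ x ∈ X, ‖f x - F k x‖ ≤ u k := fun x hx =>
    (norm_sub_le_uniformDist hf (hA_bdd _ (hFA k)) hx).trans_eq (hFu k)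
  have F_bdd : ∃ M, ∀ k, ∀ x ∈ X, ‖F k x‖ ≤ M := by
    obtain ⟨M, hM⟩ := hf
    obtain ⟨B, hB⟩ := u_lim.bddAbove_range
    refine ⟨M + B, fun k x hx => ?_⟩
    calc ‖F k x‖ = ‖f x - (f x - F k x)‖ := by rw [sub_sub_cancel]
      _ ≤ M + B := norm_sub_le_of_le (hM x hx) ((dist_le k x hx).trans (hB ⟨k, rfl⟩))
  obtain ⟨G, hGA, hG⟩ := hA_lim F hFA F_bdd
  refine ⟨G, hGA, le_antisymm ?_ (csInf_le ⟨0, nonneg⟩ ⟨G, hGA, rfl⟩)⟩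
  exact uniformDist_le (le_csInf (hA.image _) nonneg) fun x hx =>
    le_of_tendsto_of_tendsto' ((hG x hx).const_sub (f x)).norm (u_lim.mono_left hl)
      fun k => dist_le k x hx

end Approximation

section BoundedSums

variable {α S T E : Type*} [SeminormedAddCommGroup E]

/-- The functions that are bounded on `X` and given there by `x ↦ g (p x) + h (q x)`, where the
summands may be unbounded. For `p` and `q` the linear forms `a¹ · x` and `a² · x` this is
`R_a(X)`. -/
def boundedSums (p : α → S) (q : α → T) (X : Set α) : Set (α → E) :=
  {f | (∃ (g : S → E) (h : T → E), ∀ x ∈ X, f x = g (p x) + h (q x)) ∧ ∃ M, ∀ x ∈ X, ‖f x‖ ≤ M}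

theorem zero_mem_boundedSums (p : α → S) (q : α → T) (X : Set α) :
    (0 : α → E) ∈ boundedSums p q X :=
  ⟨⟨0, 0, fun _ _ => (add_zero 0).symm⟩, 0, fun _ _ => norm_zero.le⟩

theorem exists_tendsto_mem_boundedSums [ProperSpace E] {ι : Type*} (l : Ultrafilter ι)
    {p : α → S} {q : α → T} {X : Set α} {F : ι → α → E} (hF : ∀ k, F k ∈ boundedSums p q X)
    (hF_bdd : ∃ M, ∀ k, ∀ x ∈ X, ‖F k x‖ ≤ M) :
    ∃ G ∈ boundedSums p q X, ∀ x ∈ X, Tendsto (fun k => F k x) l (𝓝 (G x)) := by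
  obtain ⟨M, hM⟩ := hF_bdd
  choose g h hgh using fun k => (hF k).1
  obtain ⟨G, H, hGH⟩ := exists_tendsto_add_of_convergent (l : Filter ι) g h
  have lim : ∀ x ∈ X, Tendsto (fun k => F k x) l (𝓝 (G (p x) + H (q x))) := by
    intro x hx
    obtain ⟨c, hc⟩ := exists_tendsto_of_norm_le l fun k => hM k x hx
    simp only [hgh _ x hx] at hc ⊢
    exact hGH _ _ ⟨c, hc⟩
  refine ⟨fun x => G (p x) + H (q x), ⟨⟨G, H, fun _ _ => rfl⟩, M, fun x hx => ?_⟩, lim⟩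
  exact le_of_tendsto' (lim x hx).norm fun k => hM k x hx

theorem proximinality_of_Ra_general [ProperSpace E] (p : α → S) (q : α → T) (X : Set α)
    (f : α → E) (hf : ∃ M, ∀ x ∈ X, ‖f x‖ ≤ M) :
    ∃ g₀ ∈ boundedSums p q X,
      uniformDist X f g₀ = sInf (uniformDist X f '' boundedSums p q X) :=
  exists_uniformDist_eq_sInf (hyperfilter ℕ) Nat.hyperfilter_le_atTop
    ⟨0, zero_mem_boundedSums p q X⟩ (fun _ hg => hg.2)
    (fun _ hF hF_bdd => exists_tendsto_mem_boundedSums (hyperfilter ℕ) hF hF_bdd) hf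

end BoundedSums

/-- from Theorem 1 of Garkavi–Medvedev–Khavinson: for any subset
`X` of `ℝⁿ` and distinct nonzero directions `a¹, a²`, the space `R_a(X)` of bounded
sums of two ridge functions is proximinal in `B(X)`: every bounded function on `X`
has an extremal element in `R_a(X)`. -/
theorem proximinality_of_Ra
    {n : ℕ} (a1 a2 : Fin n → ℝ) (ha1 : a1 ≠ 0) (ha2 : a2 ≠ 0) (hne : a1 ≠ a2)
    (X : Set (Fin n → ℝ))
    (f : (Fin n → ℝ) → ℝ) (hf : BddOn f X) :
    HasExtremalIn X f (RaSet a1 a2 X) :=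
  proximinality_of_Ra_general (a1 ⬝ᵥ ·) (a2 ⬝ᵥ ·) X f hf
end
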